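/- (Symmetric equilibrium proposition.) Suppose all players share the same pure strategy set S_1 (so s_i = s_1 for all i), and for each player i fix a permutation σ_i of S_1. Let U = {x ∈ Δ : x_{iα} = x_{1σ_i(α)} for all i and α}. Let φ be a continuous incentive function such that x_{iα} + φ_{iα}(x) ≥ 0 for every x ∈ Δ, i, α, and such that φ_{1σ_i(α)}(x) = φ_{iα}(x) for every x ∈ U, every player i, and every α. Then there exists an incentive equilibrium x̂ ∈ U, i.e., x̂ ∈ U with φ_{iα}(x̂) = x̂_{iα} · Σ_β φ_{iβ}(x̂) for every player i and strategy α. -/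

import Mathlib

open Finset

/-- Mixed strategy profile space `Δ`: player `i` has `s i + 1` pure strategies
(so every player has at least one strategy). -/
def Δset {n : ℕ} (s : Fin n → ℕ) : Set (∀ i, Fin (s i + 1) → ℝ) :=
  {x | (∀ i α, 0 ≤ x i α) ∧ ∀ i, ∑ α, x i α = 1}

/-- The `α`-th standard unit vector of `ℝ^{m+1}` (pure strategy `α`). -/
def pureVec {m : ℕ} (α : Fin (m + 1)) : Fin (m + 1) → ℝ :=
  fun β => if β = α then 1 else 0

/-- Multilinear extension of a payoff function defined on pure profiles. -/
noncomputable def mulExt {n : ℕ} {s : Fin n → ℕ} (u : (∀ j, Fin (s j + 1)) → ℝ)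
    (x : ∀ i, Fin (s i + 1) → ℝ) : ℝ :=
  ∑ p : ∀ j, Fin (s j + 1), (∏ j, x j (p j)) * u p

/-- The updating map `T(x)_i = (x_i + Σ_α φ_{iα}(x) e_{iα}) / (1 + Σ_β φ_{iβ}(x))`. -/
noncomputable def Tmap {n : ℕ} {s : Fin n → ℕ}
    (φ : (∀ i, Fin (s i + 1) → ℝ) → ∀ i, Fin (s i + 1) → ℝ)
    (x : ∀ i, Fin (s i + 1) → ℝ) : ∀ i, Fin (s i + 1) → ℝ :=
  fun i α => (x i α + φ x i α) / (1 + ∑ β, φ x i β)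

/-- `φ` is an incentive function. -/
def IsInc {n : ℕ} {s : Fin n → ℕ}
    (φ : (∀ i, Fin (s i + 1) → ℝ) → ∀ i, Fin (s i + 1) → ℝ) : Prop :=
  (∀ x i α, x i α = 0 → 0 ≤ φ x i α) ∧ ∀ x i, (∑ β, φ x i β) ≠ -1

/-- `x` is an incentive equilibrium for `φ`. -/
def IncEq {n : ℕ} {s : Fin n → ℕ}
    (φ : (∀ i, Fin (s i + 1) → ℝ) → ∀ i, Fin (s i + 1) → ℝ)
    (x : ∀ i, Fin (s i + 1) → ℝ) : Prop :=
  ∀ i α, φ x i α = x i α * ∑ β, φ x i β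

/-- `x` is a Nash equilibrium: each player's payoff is the maximum over pure deviations. -/
def NashEq {n : ℕ} {s : Fin n → ℕ} (u : Fin n → (∀ j, Fin (s j + 1)) → ℝ)
    (x : ∀ i, Fin (s i + 1) → ℝ) : Prop :=
  ∀ i, mulExt (u i) x =
    Finset.univ.sup' Finset.univ_nonempty
      (fun α => mulExt (u i) (Function.update x i (pureVec α)))

/-!
The map `Tmap φ` preserves the compact convex set `U` of symmetric profiles, and its fixed points
are the incentive equilibria, so Brouwer's fixed point theorem applies on `U`. (A point of `U` where
`∑ β, φ x i β = -1` would make `Tmap φ` undefined, but there `x + φ x ≥ 0` has total mass zero, so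
`φ x = -x` and `x` is already an equilibrium.)

Brouwer's theorem reduces, by smooth approximation and the ray construction, to the absence of a
`C¹` retraction `r` of a ball onto its boundary sphere; this is proved by the method of Milnor and
Rogers. For small `t > 0` the map `x ↦ x + t • (r x - x)` is a diffeomorphism of the open ball onto
itself, so the integral of its Jacobian determinant is the volume of the ball. That integral is a
polynomial in `t`, hence equals the volume at `t = 1` as well, whereas `det (r' x) = 0` because `r`
takes values in a sphere.
-/

open Set Metric Module MeasureTheory Polynomial Topology
open scoped RealInnerProductSpace ContDiff NNReal

section Determinant

theorem exists_polynomial_eval_eq_det_one_add_smul {K V : Type*} [Field K] [AddCommGroup V]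
    [Module K V] [FiniteDimensional K V] (A : V →ₗ[K] V) :
    ∃ p : K[X], p.natDegree ≤ finrank K V ∧ ∀ t, p.eval t = LinearMap.det (1 + t • A) := by
  let b := finBasis K V
  let M := LinearMap.toMatrix b b A
  refine ⟨Matrix.det ((X : K[X]) • M.map C + (1 : Matrix _ _ K).map C), ?_, fun t => ?_⟩
  · simpa using natDegree_det_X_add_C_le M 1
  · have hM : LinearMap.toMatrix b b (1 + t • A) = 1 + t • M := by
      rw [map_add, map_smul, LinearMap.toMatrix_one]
    rw [← LinearMap.det_toMatrix b, hM, ← coe_evalRingHom, RingHom.map_det]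
    congr 1
    ext i j
    simp only [RingHom.mapMatrix_apply, Matrix.map_apply, Matrix.add_apply, Matrix.smul_apply,
      smul_eq_mul, coe_evalRingHom, eval_add, eval_mul, eval_X, eval_C]
    exact add_comm _ _

theorem exists_det_one_add_eq_sum (K V : Type*) [Field K] [AddCommGroup V] [Module K V]
    [FiniteDimensional K V] {T : Set K} (hT : T.Infinite) :
    ∃ (s : Finset K) (w : K → K), ↑s ⊆ T ∧ ∑ t ∈ s, w t = 1 ∧
      ∀ A : V →ₗ[K] V, LinearMap.det (1 + A) = ∑ t ∈ s, w t * LinearMap.det (1 + t • A) := by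
  classical
  obtain ⟨s, hsT, hs⟩ := hT.exists_subset_card_eq (finrank K V + 1)
  have hinj : Set.InjOn id (s : Set K) := Function.injective_id.injOn
  refine ⟨s, fun t => (Lagrange.basis s id t).eval 1, hsT, ?_, fun A => ?_⟩
  · rw [← eval_finsetSum, Lagrange.sum_basis hinj (card_pos.1 (by omega)), eval_one]
  · obtain ⟨p, hdeg, hp⟩ := exists_polynomial_eval_eq_det_one_add_smul A
    have hlt : p.degree < #s := (degree_le_of_natDegree_le hdeg).trans_lt (by
      rw [hs]; exact_mod_cast Nat.lt_succ_self _)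
    calc LinearMap.det (1 + A) = p.eval 1 := by rw [hp, one_smul]
      _ = ∑ t ∈ s, (Lagrange.basis s id t).eval 1 * LinearMap.det (1 + t • A) := by
        rw [Lagrange.eq_interpolate hinj hlt, Lagrange.interpolate_apply, eval_finsetSum]
        simp only [eval_mul, eval_C, id, hp, mul_comm]

theorem det_one_add_pos_of_norm_lt_one {E : Type*} [NormedAddCommGroup E] [NormedSpace ℝ E]
    [FiniteDimensional ℝ E] {B : E →L[ℝ] E} (hB : ‖B‖ < 1) : 0 < (1 + B).det := by
  have : CompleteSpace E := FiniteDimensional.complete ℝ E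
  have hne : ∀ t ∈ Set.Icc (0 : ℝ) 1, (1 + t • B).det ≠ 0 := by
    intro t ht
    have hlt : ‖-(t • B)‖ < 1 := by
      rw [norm_neg, norm_smul, Real.norm_of_nonneg ht.1]
      exact (mul_le_of_le_one_left (norm_nonneg B) ht.2).trans_lt hB
    have hunit := (isUnit_one_sub_of_norm_lt_one hlt).map ContinuousLinearMap.toLinearMapRingHom
    rw [sub_neg_eq_add] at hunit
    exact (LinearMap.isUnit_det _ hunit).ne_zero
  have hcont : Continuous fun t : ℝ => (1 + t • B).det :=
    ContinuousLinearMap.continuous_det.comp (by fun_prop)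
  by_contra! hle
  obtain ⟨t, ht, hzero⟩ := intermediate_value_Icc' zero_le_one hcont.continuousOn
    (show (0 : ℝ) ∈ _ from ⟨by simpa using hle, by simp [ContinuousLinearMap.det]⟩)
  exact hne t ht hzero

end Determinant

section BoundaryFixing

variable {E F : Type*} [NormedAddCommGroup E] [NormedSpace ℝ E]
  [NormedAddCommGroup F] [NormedSpace ℝ F]

theorem injOn_of_approximatesLinearOn_id {s : Set E} {f : E → E} {c : ℝ≥0} (hc : c < 1)
    (hf : ApproximatesLinearOn f (ContinuousLinearMap.id ℝ E) s c) : InjOn f s :=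
  ApproximatesLinearOn.injOn (f' := ContinuousLinearEquiv.refl ℝ E) hf <| by
    rcases subsingleton_or_nontrivial E with hE | hE
    · exact Or.inl hE
    · exact Or.inr (by simpa using hc)

theorem isOpen_image_of_approximatesLinearOn_id [CompleteSpace E] {s : Set E} (hs : IsOpen s)
    {f : E → E} {c : ℝ≥0} (hc : c < 1)
    (hf : ApproximatesLinearOn f (ContinuousLinearMap.id ℝ E) s c) : IsOpen (f '' s) :=
  hf.open_image ⟨id, 1, by simp, fun _ => rfl⟩ hs (Or.inr (by simpa using hc))

theorem norm_sub_le_of_approximatesLinearOn {s : Set E} {f : E → F} {L M : E →L[ℝ] F} {c : ℝ≥0}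
    (hf : ApproximatesLinearOn f L s c) {x : E} (hs : s ∈ 𝓝 x) (hM : HasFDerivAt f M x) :
    ‖M - L‖ ≤ c :=
  (hM.sub L.hasFDerivAt).le_of_lipschitzOn hs hf.lipschitzOnWith

theorem image_eq_self_of_approximatesLinearOn_id [CompleteSpace E] {U : Set E} (hU : IsOpen U)
    (hconn : IsPreconnected U) (hcomp : IsCompact (closure U)) {f : E → E} {c : ℝ≥0} (hc : c < 1)
    (hf : ApproximatesLinearOn f (ContinuousLinearMap.id ℝ E) (closure U) c)
    (hid : EqOn f id (frontier U)) (hmaps : MapsTo f U U) : f '' U = U := by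
  refine hmaps.image_subset.antisymm ?_
  rcases U.eq_empty_or_nonempty with rfl | hne
  · exact Set.empty_subset _
  have hopen : IsOpen (f '' U) :=
    isOpen_image_of_approximatesLinearOn_id hU hc (hf.mono_set subset_closure)
  have hclosed : IsClosed (f '' closure U) := (hcomp.image_of_continuousOn hf.continuousOn).isClosed
  have htrace : f '' closure U ∩ U ⊆ f '' U := by
    rintro _ ⟨⟨x, hx, rfl⟩, hfx⟩
    by_cases hxU : x ∈ U
    · exact mem_image_of_mem f hxU
    · rw [hid (hU.frontier_eq ▸ ⟨hx, hxU⟩)] at hfx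
      exact absurd hfx hxU
  refine hconn.subset_of_closure_inter_subset hopen ?_ ?_
  · exact (hne.image f).mono (Set.subset_inter hmaps.image_subset Subset.rfl)
  · exact (Set.inter_subset_inter_left U
      (closure_minimal (Set.image_mono subset_closure) hclosed)).trans htrace

variable [FiniteDimensional ℝ E] [MeasurableSpace E] [BorelSpace E]
  (μ : Measure E) [μ.IsAddHaarMeasure]

theorem setIntegral_det_fderiv_of_approximatesLinearOn_id {U : Set E} (hU : IsOpen U)
    (hconn : IsPreconnected U) (hcomp : IsCompact (closure U)) {f : E → E} {f' : E → E →L[ℝ] E}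
    {c : ℝ≥0} (hc : c < 1)
    (hf : ApproximatesLinearOn f (ContinuousLinearMap.id ℝ E) (closure U) c)
    (hid : EqOn f id (frontier U)) (hmaps : MapsTo f U U)
    (hf' : ∀ x ∈ U, HasFDerivAt f (f' x) x) : ∫ x in U, (f' x).det ∂μ = μ.real U := by
  have : CompleteSpace E := FiniteDimensional.complete ℝ E
  have hfU := hf.mono_set subset_closure
  have hpos : ∀ x ∈ U, 0 < (f' x).det := by
    intro x hx
    have hnorm : ‖f' x - 1‖ < 1 :=
      (norm_sub_le_of_approximatesLinearOn hfU (hU.mem_nhds hx) (hf' x hx)).trans_lt hc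
    simpa using det_one_add_pos_of_norm_lt_one hnorm
  calc ∫ x in U, (f' x).det ∂μ = ∫ x in U, |(f' x).det| • (1 : ℝ) ∂μ :=
        setIntegral_congr_fun hU.measurableSet fun x hx => by simp [abs_of_pos (hpos x hx)]
    _ = ∫ _ in f '' U, (1 : ℝ) ∂μ :=
        (integral_image_eq_integral_abs_det_fderiv_smul μ hU.measurableSet
          (fun x hx => (hf' x hx).hasFDerivWithinAt)
          (injOn_of_approximatesLinearOn_id hc hfU) (fun _ => (1 : ℝ))).symm
    _ = μ.real U := by
        rw [image_eq_self_of_approximatesLinearOn_id hU hconn hcomp hc hf hid hmaps]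
        simp

theorem setIntegral_det_one_add_smul_fderiv_sub_one {U : Set E} (hU : IsOpen U)
    (hconv : Convex ℝ U) (hcomp : IsCompact (closure U)) {f : E → E}
    (hf : ∀ x ∈ U, DifferentiableAt ℝ f x) (hid : EqOn f id (frontier U))
    (hmaps : MapsTo f U (closure U)) {C : ℝ≥0} (hC : LipschitzOnWith C (f - id) (closure U))
    {t : ℝ} (ht : t ∈ Ioo (0 : ℝ) (1 / (C + 1))) :
    ∫ x in U, (1 + t • (fderiv ℝ f x - 1)).det ∂μ = μ.real U := by
  have hC1 : (0 : ℝ) < C + 1 := by positivity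
  have htC : t * (C + 1) < 1 := (lt_div_iff₀ hC1).1 ht.2
  have ht1 : t < 1 := by nlinarith [ht.1, C.coe_nonneg]
  have hc : t.toNNReal * C < 1 := by
    rw [← NNReal.coe_lt_coe, NNReal.coe_mul, Real.coe_toNNReal _ ht.1.le, NNReal.coe_one]
    linarith [ht.1]
  refine setIntegral_det_fderiv_of_approximatesLinearOn_id μ hU hconv.isPreconnected hcomp hc
    (f := fun x => x + t • (f x - x)) ?_ (fun x hx => by simp [hid hx]) (fun x hx => ?_)
    fun x hx => (hasFDerivAt_id x).add
      (((hf x hx).hasFDerivAt.sub (hasFDerivAt_id x)).const_smul t)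
  · intro x hx y hy
    have hlip := hC.norm_sub_le hx hy
    simp only [Pi.sub_apply, id_eq] at hlip
    rw [ContinuousLinearMap.id_apply, NNReal.coe_mul, Real.coe_toNNReal _ ht.1.le]
    calc ‖x + t • (f x - x) - (y + t • (f y - y)) - (x - y)‖
        = ‖t • (f x - x - (f y - y))‖ := by congr 1; module
      _ = t * ‖f x - x - (f y - y)‖ := by rw [norm_smul, Real.norm_of_nonneg ht.1.le]
      _ ≤ t * C * ‖x - y‖ := by rw [mul_assoc]; gcongr; exact ht.1.le
  · have hcombo := hconv.combo_interior_closure_mem_interior (by rwa [hU.interior_eq])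
      (hmaps hx) (sub_pos.2 ht1) ht.1.le (sub_add_cancel 1 t)
    rw [hU.interior_eq] at hcombo
    convert hcombo using 1
    module

theorem setIntegral_det_fderiv_of_eqOn_frontier_id {U : Set E} (hU : IsOpen U) (hconv : Convex ℝ U)
    (hbdd : Bornology.IsBounded U) {f : E → E} (hf : ∀ x ∈ closure U, ContDiffAt ℝ 1 f x)
    (hid : EqOn f id (frontier U)) (hmaps : MapsTo f U (closure U)) :
    ∫ x in U, (fderiv ℝ f x).det ∂μ = μ.real U := by
  have hcomp : IsCompact (closure U) := hbdd.isCompact_closure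
  obtain ⟨C, hC⟩ := ContDiffOn.exists_lipschitzOnWith (f := f - id)
    (fun x hx => ((hf x hx).sub contDiffAt_id).contDiffWithinAt) one_ne_zero hconv.closure hcomp
  have hdiff : ∀ x ∈ U, DifferentiableAt ℝ f x := fun x hx =>
    (hf x (subset_closure hx)).differentiableAt one_ne_zero
  let A : E → E →L[ℝ] E := fun x => fderiv ℝ f x - 1
  have hint : ∀ t : ℝ, IntegrableOn (fun x => (1 + t • A x).det) U μ := by
    intro t
    have hfd : ContinuousOn (fderiv ℝ f) (closure U) := fun x hx =>
      ((hf x hx).fderiv_right (m := 0) (by simp)).continuousAt.continuousWithinAt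
    refine (ContinuousOn.integrableOn_compact hcomp ?_).mono_set subset_closure
    exact ContinuousLinearMap.continuous_det.comp_continuousOn (by fun_prop)
  obtain ⟨s, w, hs, hw, hdet⟩ := exists_det_one_add_eq_sum ℝ E
    (Set.Ioo_infinite (show (0 : ℝ) < 1 / (C + 1) by positivity))
  calc ∫ x in U, (fderiv ℝ f x).det ∂μ
      = ∫ x in U, ∑ t ∈ s, w t * (1 + t • A x).det ∂μ := by
        congr with x
        simpa [A, ContinuousLinearMap.det] using hdet (A x)
    _ = ∑ t ∈ s, w t * ∫ x in U, (1 + t • A x).det ∂μ := by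
        rw [integral_finsetSum _ fun t _ => (hint t).const_mul (w t)]
        simp only [integral_const_mul]
    _ = ∑ t ∈ s, w t * μ.real U := Finset.sum_congr rfl fun t ht => by
        rw [setIntegral_det_one_add_smul_fderiv_sub_one μ hU hconv hcomp hdiff hid hmaps hC (hs ht)]
    _ = μ.real U := by rw [← Finset.sum_mul, hw, one_mul]

end BoundaryFixing

section Retraction

variable {E : Type*} [NormedAddCommGroup E] [InnerProductSpace ℝ E]

theorem det_eq_zero_of_hasFDerivAt_of_norm_eventually_const [FiniteDimensional ℝ E] {f : E → E}
    {f' : E →L[ℝ] E} {x : E} (hf : HasFDerivAt f f' x) {R : ℝ} (hR : R ≠ 0)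
    (hnorm : ∀ᶠ y in 𝓝 x, ‖f y‖ = R) : f'.det = 0 := by
  have horth : ∀ v, ⟪f x, f' v⟫ = 0 := by
    have hsq : (fun y => ‖f y‖ ^ 2) =ᶠ[𝓝 x] fun _ => R ^ 2 := hnorm.mono fun y hy => by
      simp only [hy]
    have hzero := hf.norm_sq.unique ((hasFDerivAt_const (R ^ 2) x).congr_of_eventuallyEq hsq)
    intro v
    simpa using DFunLike.congr_fun hzero v
  by_contra hdet
  have hfx : f x ≠ 0 := norm_ne_zero_iff.1 (hnorm.self_of_nhds.symm ▸ hR)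
  obtain ⟨v, hv⟩ := (LinearMap.equivOfDetNeZero _ hdet).surjective (f x)
  have hfv : f' v = f x := hv
  exact hfx (inner_self_eq_zero.1 (hfv ▸ horth v))

theorem not_exists_contDiffAt_retraction_sphere [FiniteDimensional ℝ E] {R : ℝ} (hR : 0 < R) :
    ¬∃ r : E → E, (∀ x ∈ closedBall 0 R, ContDiffAt ℝ 1 r x) ∧ EqOn r id (sphere 0 R) ∧
      MapsTo r (closedBall 0 R) (sphere 0 R) := by
  rintro ⟨r, hr, hid, hmaps⟩
  borelize E
  have hclosure : closure (ball (0 : E) R) = closedBall 0 R := closure_ball 0 hR.ne'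
  have hzero : ∀ x ∈ ball (0 : E) R, (fderiv ℝ r x).det = 0 := fun x hx =>
    det_eq_zero_of_hasFDerivAt_of_norm_eventually_const
      ((hr x (ball_subset_closedBall hx)).differentiableAt one_ne_zero).hasFDerivAt hR.ne' <| by
        filter_upwards [isOpen_ball.mem_nhds hx] with y hy
        exact mem_sphere_zero_iff_norm.1 (hmaps (ball_subset_closedBall hy))
  have hint := setIntegral_det_fderiv_of_eqOn_frontier_id (volume : Measure E) isOpen_ball
    (convex_ball 0 R) isBounded_ball (hclosure ▸ hr) (frontier_ball (0 : E) hR.ne' ▸ hid)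
    (hclosure ▸ fun x hx => sphere_subset_closedBall (hmaps (ball_subset_closedBall hx)))
  rw [setIntegral_congr_fun measurableSet_ball hzero, integral_zero] at hint
  exact (ENNReal.toReal_pos (measure_ball_pos volume (0 : E) hR).ne' measure_ball_lt_top.ne).ne hint

/-- The larger root `t` of `‖x + t • w‖ = R`: the time at which the ray from `x` in the direction
`w` leaves the ball of radius `R` about the origin. The value at `w = 0` is junk. -/
noncomputable def exitTime (R : ℝ) (x w : E) : ℝ :=
  (√(⟪x, w⟫ ^ 2 + ‖w‖ ^ 2 * (R ^ 2 - ‖x‖ ^ 2)) - ⟪x, w⟫) / ‖w‖ ^ 2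

theorem norm_add_exitTime_smul {R : ℝ} {x w : E} (hx : ‖x‖ ≤ R) (hw : w ≠ 0) :
    ‖x + exitTime R x w • w‖ = R := by
  have hR : 0 ≤ R := (norm_nonneg x).trans hx
  have hw2 : ‖w‖ ^ 2 ≠ 0 := pow_ne_zero 2 (norm_ne_zero_iff.2 hw)
  have hdisc : 0 ≤ ⟪x, w⟫ ^ 2 + ‖w‖ ^ 2 * (R ^ 2 - ‖x‖ ^ 2) := by
    have : 0 ≤ R ^ 2 - ‖x‖ ^ 2 := sub_nonneg.2 (by gcongr)
    positivity
  have hroot : exitTime R x w * ‖w‖ ^ 2 + ⟪x, w⟫ =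
      √(⟪x, w⟫ ^ 2 + ‖w‖ ^ 2 * (R ^ 2 - ‖x‖ ^ 2)) := by
    rw [exitTime, div_mul_cancel₀ _ hw2, sub_add_cancel]
  have hsq := Real.sq_sqrt hdisc
  rw [← hroot] at hsq
  rw [← sq_eq_sq₀ (norm_nonneg _) hR, norm_add_sq_real, norm_smul, mul_pow, Real.norm_eq_abs,
    sq_abs, real_inner_smul_right]
  apply mul_right_cancel₀ hw2
  linear_combination hsq

theorem exitTime_eq_zero {R : ℝ} {x w : E} (hx : ‖x‖ = R) (hxw : 0 ≤ ⟪x, w⟫) :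
    exitTime R x w = 0 := by
  rw [exitTime, hx, sub_self, mul_zero, add_zero, Real.sqrt_sq hxw, sub_self, zero_div]

theorem inner_sub_pos_of_norm_le {x y : E} (hyx : ‖y‖ ≤ ‖x‖) (hne : y ≠ x) : 0 < ⟪x, x - y⟫ := by
  have hsq : ‖y‖ ^ 2 ≤ ‖x‖ ^ 2 := by gcongr
  have hpos : 0 < ‖x - y‖ ^ 2 := pow_pos (norm_pos_iff.2 (sub_ne_zero.2 hne.symm)) 2
  have hexpand := norm_sub_sq_real x y
  rw [inner_sub_right, real_inner_self_eq_norm_sq]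
  linarith

theorem contDiffAt_exitTime {F : Type*} [NormedAddCommGroup F] [NormedSpace ℝ F] {k : WithTop ℕ∞}
    {u w : F → E} {R : ℝ} {a : F} (hu : ContDiffAt ℝ k u a) (hw : ContDiffAt ℝ k w a)
    (hne : w a ≠ 0) (hdisc : ⟪u a, w a⟫ ^ 2 + ‖w a‖ ^ 2 * (R ^ 2 - ‖u a‖ ^ 2) ≠ 0) :
    ContDiffAt ℝ k (fun z => exitTime R (u z) (w z)) a := by
  have hinner := hu.inner ℝ hw
  refine ContDiffAt.div (.sub (.sqrt ?_ hdisc) hinner) (hw.norm_sq ℝ)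
    (pow_ne_zero 2 (norm_ne_zero_iff.2 hne))
  exact (hinner.pow 2).add ((hw.norm_sq ℝ).mul (contDiffAt_const.sub (hu.norm_sq ℝ)))

theorem exists_fixedPoint_closedBall_of_contDiff [FiniteDimensional ℝ E] {R : ℝ} (hR : 0 < R)
    {g : E → E} (hg : ContDiff ℝ 1 g) (hmaps : MapsTo g (closedBall 0 R) (closedBall 0 R)) :
    ∃ x ∈ closedBall (0 : E) R, g x = x := by
  by_contra! hne
  simp only [MapsTo, mem_closedBall_zero_iff] at hmaps hne
  have houtward : ∀ x, ‖x‖ = R → 0 < ⟪x, x - g x⟫ := fun x hx =>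
    inner_sub_pos_of_norm_le (hx ▸ hmaps hx.le) (hne x hx.le)
  refine not_exists_contDiffAt_retraction_sphere hR
    ⟨fun x => x + exitTime R x (x - g x) • (x - g x), fun x hx => ?_, fun x hx => ?_,
      fun x hx => ?_⟩
  · rw [mem_closedBall_zero_iff] at hx
    have hdir : ContDiffAt ℝ 1 (fun x => x - g x) x := contDiffAt_id.sub hg.contDiffAt
    have hdir_ne : x - g x ≠ 0 := sub_ne_zero.2 (hne x hx).symm
    refine contDiffAt_id.add (.smul (contDiffAt_exitTime contDiffAt_id hdir hdir_ne ?_) hdir)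
    rcases hx.eq_or_lt with hx | hx
    · simp [hx, (houtward x hx).ne']
    · have hgap : 0 < R ^ 2 - ‖x‖ ^ 2 := sub_pos.2 (by gcongr)
      positivity
  · rw [mem_sphere_zero_iff_norm] at hx
    simp [exitTime_eq_zero hx (houtward x hx).le]
  · rw [mem_closedBall_zero_iff] at hx
    exact mem_sphere_zero_iff_norm.2
      (norm_add_exitTime_smul hx (sub_ne_zero.2 (hne x hx).symm))

end Retraction

section Brouwer

variable {E : Type*}

theorem exists_contDiff_forall_mem_dist_lt [NormedAddCommGroup E] [NormedSpace ℝ E]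
    [FiniteDimensional ℝ E] {F : Type*} [NormedAddCommGroup F] [NormedSpace ℝ F] {K : Set E}
    (hK : IsClosed K) {C : Set F} (hC : Convex ℝ C) (hne : C.Nonempty) {f : E → F}
    (hf : ContinuousOn f K) (hmaps : MapsTo f K C) {ε : ℝ} (hε : 0 < ε) :
    ∃ g : E → F, ContDiff ℝ ∞ g ∧ (∀ x, g x ∈ C) ∧ ∀ x ∈ K, dist (g x) (f x) < ε := by
  have hconv : ∀ x, Convex ℝ (C ∩ {y | x ∈ K → dist y (f x) < ε}) := by
    intro x
    by_cases hx : x ∈ K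
    · simpa [hx, ball] using hC.inter (convex_ball (f x) ε)
    · simpa [hx] using hC
  have hloc : ∀ x, ∃ c, ∀ᶠ y in 𝓝 x, c ∈ C ∩ {z | y ∈ K → dist z (f y) < ε} := by
    intro x
    by_cases hx : x ∈ K
    · refine ⟨f x, ?_⟩
      filter_upwards [eventually_nhdsWithin_iff.1 (tendsto_nhds.1 (hf x hx) ε hε)] with y hy
      exact ⟨hmaps hx, fun hyK => dist_comm (f x) (f y) ▸ hy hyK⟩
    · obtain ⟨c, hc⟩ := hne
      exact ⟨c, (hK.isOpen_compl.eventually_mem hx).mono fun y hy => ⟨hc, fun hyK => absurd hyK hy⟩⟩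
  obtain ⟨g, hg⟩ := exists_contMDiffMap_forall_mem_convex_of_local_const
    (n := (⊤ : ℕ∞)) (modelWithCornersSelf ℝ E) hconv hloc
  exact ⟨g, g.contMDiff.contDiff, fun x => (hg x).1, fun x => (hg x).2⟩

theorem exists_dist_apply_lt_of_mapsTo_convex [NormedAddCommGroup E] [InnerProductSpace ℝ E]
    [FiniteDimensional ℝ E] {K : Set E} (hK : IsCompact K) (hconv : Convex ℝ K)
    (hne : K.Nonempty) {f : E → E} (hf : ContinuousOn f K) (hmaps : MapsTo f K K) {ε : ℝ}
    (hε : 0 < ε) : ∃ x ∈ K, dist (f x) x < ε := by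
  obtain ⟨g, hg, hgK, hgf⟩ := exists_contDiff_forall_mem_dist_lt hK.isClosed hconv hne hf hmaps hε
  obtain ⟨R, hR, hKR⟩ := hK.isBounded.subset_closedBall_lt 0 0
  obtain ⟨x, -, hx⟩ := exists_fixedPoint_closedBall_of_contDiff hR (hg.of_le (by simp))
    fun x _ => hKR (hgK x)
  have hxK : x ∈ K := hx ▸ hgK x
  exact ⟨x, hxK, by simpa [hx, dist_comm] using hgf x hxK⟩

theorem exists_fixedPoint_of_mapsTo_convex_of_innerProductSpace [NormedAddCommGroup E]
    [InnerProductSpace ℝ E] [FiniteDimensional ℝ E] {K : Set E} (hK : IsCompact K)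
    (hconv : Convex ℝ K) (hne : K.Nonempty) {f : E → E} (hf : ContinuousOn f K)
    (hmaps : MapsTo f K K) : ∃ x ∈ K, f x = x := by
  have hdist : ContinuousOn (fun x => dist (f x) x) K :=
    continuous_dist.comp_continuousOn (hf.prodMk continuousOn_id)
  obtain ⟨x, hx, hmin⟩ := hK.exists_isMinOn hne hdist
  refine ⟨x, hx, ?_⟩
  by_contra hfx
  obtain ⟨y, hy, hlt⟩ :=
    exists_dist_apply_lt_of_mapsTo_convex hK hconv hne hf hmaps (dist_pos.2 hfx)
  exact (isMinOn_iff.1 hmin y hy).not_gt hlt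

theorem exists_fixedPoint_of_mapsTo_convex [AddCommGroup E] [Module ℝ E] [TopologicalSpace E]
    [IsTopologicalAddGroup E] [ContinuousSMul ℝ E] [T2Space E] [FiniteDimensional ℝ E] {K : Set E}
    (hK : IsCompact K) (hconv : Convex ℝ K) (hne : K.Nonempty) {f : E → E}
    (hf : ContinuousOn f K) (hmaps : MapsTo f K K) : ∃ x ∈ K, f x = x := by
  let e : E ≃L[ℝ] EuclideanSpace ℝ (Fin (finrank ℝ E)) := toEuclidean
  have hback : MapsTo e.symm (e '' K) K := by
    rintro _ ⟨x, hx, rfl⟩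
    simpa using hx
  obtain ⟨_, ⟨x, hx, rfl⟩, hfix⟩ := exists_fixedPoint_of_mapsTo_convex_of_innerProductSpace
    (hK.image e.continuous) (hconv.linear_image e.toLinearMap) (hne.image e)
    (f := e ∘ f ∘ e.symm)
    (e.continuous.comp_continuousOn (hf.comp e.symm.continuous.continuousOn hback))
    ((mapsTo_image e K).comp (hmaps.comp hback))
  exact ⟨x, hx, by simpa using hfix⟩

end Brouwer

section Incentive

variable {n : ℕ} {s : Fin n → ℕ} {φ : (∀ i, Fin (s i + 1) → ℝ) → ∀ i, Fin (s i + 1) → ℝ}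
  {x : ∀ i, Fin (s i + 1) → ℝ}

theorem Δset_eq_pi_stdSimplex (s : Fin n → ℕ) :
    Δset s = Set.univ.pi fun i => stdSimplex ℝ (Fin (s i + 1)) := by
  ext x
  simp [Δset, stdSimplex, forall_and]

theorem isCompact_Δset (s : Fin n → ℕ) : IsCompact (Δset s) :=
  Δset_eq_pi_stdSimplex s ▸ isCompact_univ_pi fun _ => isCompact_stdSimplex ℝ _

theorem convex_Δset (s : Fin n → ℕ) : Convex ℝ (Δset s) :=
  Δset_eq_pi_stdSimplex s ▸ convex_pi fun _ _ => convex_stdSimplex ℝ _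

theorem Tmap_eq_self_iff_incEq (hne : ∀ i, ∑ β, φ x i β ≠ -1) : Tmap φ x = x ↔ IncEq φ x := by
  simp only [funext_iff, IncEq, Tmap]
  refine forall₂_congr fun i α => ?_
  rw [div_eq_iff (fun h => hne i (by linarith))]
  constructor <;> intro h <;> linarith

theorem sum_add_incentive (hx : x ∈ Δset s) (i : Fin n) :
    ∑ α, (x i α + φ x i α) = 1 + ∑ β, φ x i β := by
  rw [Finset.sum_add_distrib, hx.2 i]

theorem Tmap_mem_Δset (hx : x ∈ Δset s) (hpos : ∀ i α, 0 ≤ x i α + φ x i α)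
    (hne : ∀ i, ∑ β, φ x i β ≠ -1) : Tmap φ x ∈ Δset s := by
  refine ⟨fun i α => div_nonneg (hpos i α) ?_, fun i => ?_⟩
  · rw [← sum_add_incentive hx]
    exact Finset.sum_nonneg fun β _ => hpos i β
  · simp only [Tmap]
    rw [← Finset.sum_div, sum_add_incentive hx, div_self fun h => hne i (by linarith)]

theorem continuousOn_Tmap {D : Set (∀ i, Fin (s i + 1) → ℝ)} (hφ : ContinuousOn φ D)
    (hne : ∀ x ∈ D, ∀ i, ∑ β, φ x i β ≠ -1) : ContinuousOn (Tmap φ) D := by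
  have hcoord : ∀ i α, ContinuousOn (fun x => φ x i α) D := fun i α => by fun_prop
  refine continuousOn_pi.2 fun i => continuousOn_pi.2 fun α => ContinuousOn.div ?_ ?_ ?_
  · exact (by fun_prop : Continuous fun x : ∀ i, Fin (s i + 1) → ℝ => x i α).continuousOn.add
      (hcoord i α)
  · exact continuousOn_const.add (continuousOn_finsetSum _ fun β _ => hcoord i β)
  · exact fun x hx h => hne x hx i (by linarith)

theorem incEq_of_sum_eq_neg_one (hx : x ∈ Δset s) (hpos : ∀ i α, 0 ≤ x i α + φ x i α)
    (hsum : ∀ i, ∑ β, φ x i β = -1) : IncEq φ x := by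
  intro i α
  have htotal : ∑ β, (x i β + φ x i β) = 0 := by rw [sum_add_incentive hx, hsum, add_neg_cancel]
  have hzero := (Finset.sum_eq_zero_iff_of_nonneg fun β _ => hpos i β).1 htotal α (mem_univ α)
  rw [hsum]
  linarith

end Incentive

section Symmetric

variable {n m : ℕ}

/-- The set `U` of mixed profiles in which every player `i` plays the base player's strategy,
relabelled by `σ i`; the statement takes the first player as the base player `o`. -/
def symmetricSet (o : Fin n) (σ : Fin n → Equiv.Perm (Fin (m + 1))) :
    Set (Fin n → Fin (m + 1) → ℝ) :=
  {x ∈ Δset (fun _ : Fin n => m) | ∀ i α, x i α = x o (σ i α)}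

variable (o : Fin n) (σ : Fin n → Equiv.Perm (Fin (m + 1)))

theorem isCompact_symmetricSet : IsCompact (symmetricSet o σ) := by
  have hclosed : IsClosed {x : Fin n → Fin (m + 1) → ℝ | ∀ i α, x i α = x o (σ i α)} := by
    simp only [Set.ofPred_forall]
    exact isClosed_iInter fun i => isClosed_iInter fun α => isClosed_eq (by fun_prop) (by fun_prop)
  exact (isCompact_Δset _).inter_right hclosed

theorem convex_symmetricSet : Convex ℝ (symmetricSet o σ) :=
  (convex_Δset _).inter fun x hx y hy a b _ _ _ i α => by simp [hx i α, hy i α]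

theorem symmetricSet_nonempty : (symmetricSet o σ).Nonempty :=
  ⟨fun _ _ => (m + 1 : ℝ)⁻¹, ⟨fun _ _ => by positivity, fun _ => by
    simp [mul_inv_cancel₀ (Nat.cast_add_one_ne_zero (R := ℝ) m)]⟩, fun _ _ => rfl⟩

variable {o σ} {φ : (Fin n → Fin (m + 1) → ℝ) → Fin n → Fin (m + 1) → ℝ}
  {x : Fin n → Fin (m + 1) → ℝ}

theorem sum_incentive_eq_of_symmetric (hsym : ∀ i α, φ x o (σ i α) = φ x i α) (i : Fin n) :
    ∑ β, φ x i β = ∑ β, φ x o β := by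
  rw [← Equiv.sum_comp (σ i) (φ x o)]
  exact Finset.sum_congr rfl fun β _ => (hsym i β).symm

theorem Tmap_mem_symmetricSet (hx : x ∈ symmetricSet o σ) (hpos : ∀ i α, 0 ≤ x i α + φ x i α)
    (hne : ∀ i, ∑ β, φ x i β ≠ -1) (hsym : ∀ i α, φ x o (σ i α) = φ x i α) :
    Tmap φ x ∈ symmetricSet o σ :=
  ⟨Tmap_mem_Δset hx.1 hpos hne, fun i α => by
    simp only [Tmap]
    rw [hx.2 i α, hsym i α, sum_incentive_eq_of_symmetric hsym i]⟩

theorem exists_incentive_equilibrium_in_symmetric_set_general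
    (hcont : ContinuousOn φ (symmetricSet o σ))
    (hpos : ∀ x ∈ symmetricSet o σ, ∀ i α, 0 ≤ x i α + φ x i α)
    (hsym : ∀ x ∈ symmetricSet o σ, ∀ i α, φ x o (σ i α) = φ x i α) :
    ∃ x ∈ symmetricSet o σ, IncEq φ x := by
  by_cases hdeg : ∃ x ∈ symmetricSet o σ, ∑ β, φ x o β = -1
  · obtain ⟨x, hx, hsum⟩ := hdeg
    exact ⟨x, hx, incEq_of_sum_eq_neg_one hx.1 (hpos x hx) fun i =>
      (sum_incentive_eq_of_symmetric (hsym x hx) i).trans hsum⟩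
  · have hne : ∀ x ∈ symmetricSet o σ, ∀ i, ∑ β, φ x i β ≠ -1 := fun x hx i h =>
      hdeg ⟨x, hx, (sum_incentive_eq_of_symmetric (hsym x hx) i).symm.trans h⟩
    obtain ⟨x, hx, hfix⟩ := exists_fixedPoint_of_mapsTo_convex (isCompact_symmetricSet o σ)
      (convex_symmetricSet o σ) (symmetricSet_nonempty o σ) (continuousOn_Tmap hcont hne)
      fun x hx => Tmap_mem_symmetricSet hx (hpos x hx) (hne x hx) (hsym x hx)
    exact ⟨x, hx, (Tmap_eq_self_iff_incEq (hne x hx)).1 hfix⟩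

end Symmetric

/-- Symmetric equilibrium proposition: under the symmetry hypothesis on the
continuous incentive `φ`, an incentive equilibrium exists in the symmetric set `U`. -/
theorem exists_incentive_equilibrium_in_symmetric_set {n : ℕ} (hn : 0 < n) (m : ℕ)
    (σ : Fin n → Equiv.Perm (Fin (m + 1)))
    (φ : (∀ i : Fin n, Fin ((fun _ : Fin n => m) i + 1) → ℝ) →
      ∀ i : Fin n, Fin ((fun _ : Fin n => m) i + 1) → ℝ)
    (hφ : IsInc φ) (hcont : Continuous φ)
    (hpos : ∀ x ∈ Δset (fun _ : Fin n => m), ∀ i α, 0 ≤ x i α + φ x i α)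
    (hsym : ∀ x ∈ {x ∈ Δset (fun _ : Fin n => m) |
        ∀ i α, x i α = x ⟨0, hn⟩ (σ i α)},
      ∀ i α, φ x ⟨0, hn⟩ (σ i α) = φ x i α) :
    ∃ x ∈ {x ∈ Δset (fun _ : Fin n => m) | ∀ i α, x i α = x ⟨0, hn⟩ (σ i α)},
      IncEq φ x :=
  exists_incentive_equilibrium_in_symmetric_set_general hcont.continuousOn
    (fun x hx => hpos x hx.1) hsym
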